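/- Let Σ be a finite mode set and suppose that for every j ∈ Σ the matrix Q_j is symmetric negative definite and the closed-loop dissipation matrix Γ_j is positive definite. Then the switched linear system ẋ(t) = Â_{σ(t)}x(t) + B̂_{σ(t)}w(t), y(t) = C_{σ(t)}x(t) + D_{σ(t)}w(t) is L2-stable under arbitrary switching: there exist a, b > 0, depending only on the system and dissipativity matrices, such that for every T > 0, every piecewise-constant switching signal σ : [0,T] → Σ, every continuous w : [0,T] → ℝᵖ, and every differentiable solution x : [0,T] → ℝⁿ, it holds that ∫₀ᵀ ‖y(t)‖² dt ≤ a ∫₀ᵀ ‖w(t)‖² dt + b · x(0)'P x(0). -/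

import Mathlib

open Matrix

/-- The closed-loop dissipation matrix Γ: a symmetric 2×2 block matrix with blocks
Γ₁₁ = C'QC − PÂ − Â'P, Γ₁₂ = C'QD + C'S − PB̂, Γ₂₂ = D'QD + D'S + S'D + R. -/
noncomputable def dissipationMatrix {n p q : ℕ}
    (P Ahat : Matrix (Fin n) (Fin n) ℝ) (Bhat : Matrix (Fin n) (Fin p) ℝ)
    (C : Matrix (Fin q) (Fin n) ℝ) (D : Matrix (Fin q) (Fin p) ℝ)
    (Q : Matrix (Fin q) (Fin q) ℝ) (S : Matrix (Fin q) (Fin p) ℝ)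
    (R : Matrix (Fin p) (Fin p) ℝ) :
    Matrix (Fin n ⊕ Fin p) (Fin n ⊕ Fin p) ℝ :=
  Matrix.fromBlocks
    (Cᵀ * Q * C - P * Ahat - Ahatᵀ * P)
    (Cᵀ * Q * D + Cᵀ * S - P * Bhat)
    ((Cᵀ * Q * D + Cᵀ * S - P * Bhat)ᵀ)
    (Dᵀ * Q * D + Dᵀ * S + Sᵀ * D + R)

/-- A switching signal is piecewise constant on a set if it is locally
constant there except at finitely many (switching) instants. -/
def PiecewiseConstantOn {α : Type*} (σ : ℝ → α) (s : Set ℝ) : Prop :=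
  ∃ F : Finset ℝ, ∀ t ∈ s, t ∉ F → ∀ᶠ u in nhds t, σ u = σ t

/-! Positive semidefiniteness of `Γ_j` says that along mode `j` the storage function `V x = x'Px`
grows at most at the quadratic supply rate `y'Q_jy + 2y'S_jw + w'R_jw`. Since `Q_j` is negative
definite, completing the square absorbs the cross term, so every supply rate is at most
`K ‖w‖² - ε ‖y‖²`, with `K` and `ε > 0` common to the finitely many modes. As `V` is shared by all
modes, `V' ≤ K ‖w‖² - ε ‖y‖²` can be integrated across the switching instants, and `V (x T) ≥ 0`
gives the `L²` bound. -/

open MeasureTheory Set Filter Topology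

section QuadraticForms

variable {k l : Type*} [Fintype k] [Fintype l]

lemma dotProduct_mulVec_comm_of_isSymm {α : Type*} [CommSemiring α] {M : Matrix k k α}
    (hM : M.IsSymm) (u v : k → α) : u ⬝ᵥ (M *ᵥ v) = v ⬝ᵥ (M *ᵥ u) := by
  simpa only [hM.eq] using dotProduct_transpose_mulVec M u v

lemma exists_dotProduct_mulVec_le (M : Matrix k k ℝ) :
    ∃ K : ℝ, ∀ v, v ⬝ᵥ (M *ᵥ v) ≤ K * (v ⬝ᵥ v) := by
  classical
  refine ⟨‖toEuclideanCLM (𝕜 := ℝ) M‖, fun v => ?_⟩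
  set u : EuclideanSpace ℝ k := WithLp.toLp 2 v
  calc v ⬝ᵥ (M *ᵥ v) = inner ℝ u (toEuclideanCLM (𝕜 := ℝ) M u) := (inner_toEuclideanCLM M u u).symm
    _ ≤ ‖u‖ * ‖toEuclideanCLM (𝕜 := ℝ) M u‖ := real_inner_le_norm _ _
    _ ≤ ‖u‖ * (‖toEuclideanCLM (𝕜 := ℝ) M‖ * ‖u‖) := by
      gcongr
      exact ContinuousLinearMap.le_opNorm _ _
    _ = ‖toEuclideanCLM (𝕜 := ℝ) M‖ * inner ℝ u u := by
      rw [real_inner_self_eq_norm_sq]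
      ring
    _ = ‖toEuclideanCLM (𝕜 := ℝ) M‖ * (v ⬝ᵥ v) := rfl

open scoped MatrixOrder in
lemma exists_pos_mul_dotProduct_self_le_of_posDef {M : Matrix k k ℝ} (hM : M.PosDef) :
    ∃ δ > (0 : ℝ), ∀ v, δ * (v ⬝ᵥ v) ≤ v ⬝ᵥ (M *ᵥ v) := by
  classical
  cases isEmpty_or_nonempty k
  · exact ⟨1, one_pos, fun v => by simp [dotProduct]⟩
  obtain ⟨δ, hδ, hle⟩ := (CFC.exists_pos_algebraMap_le_iff hM.isHermitian.isSelfAdjoint).mpr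
    fun _ => hM.isStrictlyPositive.spectrum_pos
  refine ⟨δ, hδ, fun v => ?_⟩
  have hnonneg := (Matrix.le_iff.mp hle).dotProduct_mulVec_nonneg v
  simpa [Algebra.algebraMap_eq_smul_one, sub_mulVec, smul_mulVec, dotProduct_sub] using hnonneg

lemma hasDerivAt_dotProduct_mulVec_self {M : Matrix k k ℝ} (hM : M.IsSymm) {x : ℝ → k → ℝ}
    {x' : k → ℝ} {t : ℝ} (hx : HasDerivAt x x' t) :
    HasDerivAt (fun s => x s ⬝ᵥ (M *ᵥ x s)) (2 * (x t ⬝ᵥ (M *ᵥ x'))) t := by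
  have hcoord := hasDerivAt_pi.mp hx
  have hprod : HasDerivAt (fun s => x s ⬝ᵥ (M *ᵥ x s))
      (x' ⬝ᵥ (M *ᵥ x t) + x t ⬝ᵥ (M *ᵥ x')) t := by
    simp only [dotProduct, mulVec, ← Finset.sum_add_distrib]
    exact HasDerivAt.fun_sum fun i _ =>
      (hcoord i).mul (HasDerivAt.fun_sum fun j _ => (hcoord j).const_mul (M i j))
  rwa [dotProduct_mulVec_comm_of_isSymm hM x' (x t), ← two_mul] at hprod

end QuadraticForms

section SupplyRate

variable {k l : Type*} [Fintype k] [Fintype l]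

/-- The quadratic supply rate `y'Qy + 2y'Sw + w'Rw` of dissipativity theory, at output `y` and
input `w`. -/
def supplyRate (Q : Matrix k k ℝ) (S : Matrix k l ℝ) (R : Matrix l l ℝ)
    (y : k → ℝ) (w : l → ℝ) : ℝ :=
  y ⬝ᵥ (Q *ᵥ y) + 2 * (y ⬝ᵥ (S *ᵥ w)) + w ⬝ᵥ (R *ᵥ w)

lemma two_mul_dotProduct_le {δ : ℝ} (hδ : 0 < δ) (u v : k → ℝ) :
    2 * (u ⬝ᵥ v) ≤ δ * (u ⬝ᵥ u) + δ⁻¹ * (v ⬝ᵥ v) := by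
  have hsq : 0 ≤ δ⁻¹ * ((δ • u - v) ⬝ᵥ (δ • u - v)) :=
    mul_nonneg (inv_pos.mpr hδ).le (dotProduct_star_self_nonneg _)
  have hexpand : δ⁻¹ * ((δ • u - v) ⬝ᵥ (δ • u - v)) =
      δ * (u ⬝ᵥ u) - 2 * (u ⬝ᵥ v) + δ⁻¹ * (v ⬝ᵥ v) := by
    simp only [sub_dotProduct, dotProduct_sub, smul_dotProduct, dotProduct_smul, smul_eq_mul,
      dotProduct_comm v u]
    field_simp
    ring
  linarith

lemma exists_supplyRate_le {Q : Matrix k k ℝ} (hQ : (-Q).PosDef) (S : Matrix k l ℝ)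
    (R : Matrix l l ℝ) :
    ∃ ε > (0 : ℝ), ∃ K : ℝ, ∀ y w, supplyRate Q S R y w ≤ K * (w ⬝ᵥ w) - ε * (y ⬝ᵥ y) := by
  obtain ⟨δ, hδ, hcoercive⟩ := exists_pos_mul_dotProduct_self_le_of_posDef hQ
  obtain ⟨K, hK⟩ := exists_dotProduct_mulVec_le ((δ / 2)⁻¹ • (Sᵀ * S) + R)
  refine ⟨δ / 2, half_pos hδ, K, fun y w => ?_⟩
  have houtput : y ⬝ᵥ (Q *ᵥ y) ≤ -(δ * (y ⬝ᵥ y)) := by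
    simpa [neg_mulVec, le_neg] using hcoercive y
  have hcross := two_mul_dotProduct_le (half_pos hδ) y (S *ᵥ w)
  have hinput : (δ / 2)⁻¹ * ((S *ᵥ w) ⬝ᵥ (S *ᵥ w)) + w ⬝ᵥ (R *ᵥ w) ≤ K * (w ⬝ᵥ w) := by
    simpa only [add_mulVec, smul_mulVec, dotProduct_add, dotProduct_smul, ← mulVec_mulVec,
      dotProduct_transpose_mulVec, dotProduct_comm (S *ᵥ w), smul_eq_mul] using hK w
  unfold supplyRate
  linarith

lemma exists_forall_supplyRate_le {ι : Type*} [Finite ι] {Q : ι → Matrix k k ℝ}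
    (hQ : ∀ j, (-(Q j)).PosDef) (S : ι → Matrix k l ℝ) (R : ι → Matrix l l ℝ) :
    ∃ ε > (0 : ℝ), ∃ K > (0 : ℝ), ∀ j y w,
      supplyRate (Q j) (S j) (R j) y w ≤ K * (w ⬝ᵥ w) - ε * (y ⬝ᵥ y) := by
  choose ε hε K hsupply using fun j => exists_supplyRate_le (hQ j) (S j) (R j)
  have hsmall : ∀ᶠ ε₀ in 𝓝[>] (0 : ℝ), ∀ j, ε₀ ≤ ε j :=
    eventually_all.mpr fun j => nhdsWithin_le_nhds (eventually_le_nhds (hε j))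
  obtain ⟨ε₀, hε₀, hε₀_le⟩ : ∃ ε₀ > 0, ∀ j, ε₀ ≤ ε j :=
    (eventually_mem_nhdsWithin.and hsmall).exists
  obtain ⟨K₀, hK₀, hK₀_ge⟩ : ∃ K₀ > 0, ∀ j, K j ≤ K₀ :=
    ((eventually_gt_atTop 0).and <| eventually_all.mpr fun j => eventually_ge_atTop (K j)).exists
  refine ⟨ε₀, hε₀, K₀, hK₀, fun j y w => (hsupply j y w).trans ?_⟩
  have hy : 0 ≤ y ⬝ᵥ y := dotProduct_star_self_nonneg y
  have hw : 0 ≤ w ⬝ᵥ w := dotProduct_star_self_nonneg w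
  gcongr
  exacts [hK₀_ge j, hε₀_le j]

end SupplyRate

section DissipationInequality

variable {n p q : ℕ} {P A : Matrix (Fin n) (Fin n) ℝ} {B : Matrix (Fin n) (Fin p) ℝ}
  {C : Matrix (Fin q) (Fin n) ℝ} {D : Matrix (Fin q) (Fin p) ℝ} {Q : Matrix (Fin q) (Fin q) ℝ}
  {S : Matrix (Fin q) (Fin p) ℝ} {R : Matrix (Fin p) (Fin p) ℝ}

lemma dotProduct_dissipationMatrix_mulVec (hP : P.IsSymm) (hQ : Q.IsSymm)
    (x : Fin n → ℝ) (w : Fin p → ℝ) :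
    Sum.elim x w ⬝ᵥ (dissipationMatrix P A B C D Q S R *ᵥ Sum.elim x w) =
      supplyRate Q S R (C *ᵥ x + D *ᵥ w) w - 2 * (x ⬝ᵥ (P *ᵥ (A *ᵥ x + B *ᵥ w))) := by
  simp only [dissipationMatrix, supplyRate, fromBlocks_mulVec, Sum.elim_comp_inl,
    Sum.elim_comp_inr, sumElim_dotProduct_sumElim, transpose_sub, transpose_add, transpose_mul,
    transpose_transpose, hP.eq, hQ.eq, add_mulVec, sub_mulVec, mulVec_add, dotProduct_add,
    dotProduct_sub, add_dotProduct, ← mulVec_mulVec, dotProduct_transpose_mulVec,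
    dotProduct_comm (P *ᵥ _), dotProduct_comm (Q *ᵥ _), dotProduct_comm (S *ᵥ _)]
  rw [dotProduct_mulVec_comm_of_isSymm hQ (D *ᵥ w) (C *ᵥ x),
    dotProduct_mulVec_comm_of_isSymm hP (A *ᵥ x) x, dotProduct_mulVec_comm_of_isSymm hP (B *ᵥ w) x]
  ring

lemma two_mul_dotProduct_mulVec_le_supplyRate (hP : P.IsSymm) (hQ : Q.IsSymm)
    (hΓ : (dissipationMatrix P A B C D Q S R).PosSemidef) (x : Fin n → ℝ) (w : Fin p → ℝ) :
    2 * (x ⬝ᵥ (P *ᵥ (A *ᵥ x + B *ᵥ w))) ≤ supplyRate Q S R (C *ᵥ x + D *ᵥ w) w := by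
  rw [← sub_nonneg, ← dotProduct_dissipationMatrix_mulVec hP hQ]
  exact hΓ.dotProduct_mulVec_nonneg (Sum.elim x w)

end DissipationInequality

namespace PiecewiseConstantOn

variable {ι E : Type*} [Finite ι] [NormedAddCommGroup E] {σ : ℝ → ι} {f : ι → ℝ → E}
  {μ : Measure ℝ} [NullSingletonClass μ]

lemma integrableOn {s : Set ℝ} (hσ : PiecewiseConstantOn σ s) (hs : MeasurableSet s)
    (hf : ∀ j, IntegrableOn (f j) s μ) : IntegrableOn (fun t => f (σ t) t) s μ := by
  obtain ⟨F, hF⟩ := hσ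
  have hcover : s \ F ⊆ ⋃ j, s ∩ interior (σ ⁻¹' {j}) := fun t ht =>
    mem_iUnion.mpr ⟨σ t, ht.1, mem_interior_iff_mem_nhds.mpr (hF t ht.1 ht.2)⟩
  have hmode (j : ι) : IntegrableOn (fun t => f (σ t) t) (s ∩ interior (σ ⁻¹' {j})) μ := by
    refine ((hf j).mono_set inter_subset_left).congr_fun (fun t ht => ?_)
      (hs.inter measurableSet_interior)
    have hσt : t ∈ σ ⁻¹' {j} := interior_subset ht.2
    simp only [eq_of_mem_singleton hσt]
  exact ((integrableOn_finite_iUnion.mpr hmode).mono_set hcover).congr_set_ae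
    (sdiff_null_ae_eq_self (F.finite_toSet.measure_zero μ)).symm

lemma intervalIntegrable [IsLocallyFiniteMeasure μ] {a b : ℝ}
    (hσ : PiecewiseConstantOn σ (Icc a b)) (hab : a ≤ b)
    (hf : ∀ j, ContinuousOn (f j) (Icc a b)) :
    IntervalIntegrable (fun t => f (σ t) t) μ a b :=
  (intervalIntegrable_iff_integrableOn_Icc_of_le hab).mpr <|
    hσ.integrableOn measurableSet_Icc fun j => (hf j).integrableOn_Icc

end PiecewiseConstantOn

lemma integral_le_of_storage_deriv_le {V V' u z : ℝ → ℝ} {K ε a b : ℝ} {N : Set ℝ} (hab : a ≤ b)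
    (hε : 0 < ε) (hN : N.Countable) (hVcont : ContinuousOn V (Icc a b))
    (hV : ∀ t ∈ Ioo a b \ N, HasDerivAt V (V' t) t) (hVb : 0 ≤ V b)
    (hV' : IntervalIntegrable V' volume a b) (hu : IntervalIntegrable u volume a b)
    (hz : IntervalIntegrable z volume a b) (hle : ∀ t ∈ Icc a b, V' t ≤ K * u t - ε * z t) :
    ∫ t in a..b, z t ≤ K / ε * (∫ t in a..b, u t) + 1 / ε * V a := by
  have hbalance : V b - V a ≤ K * (∫ t in a..b, u t) - ε * ∫ t in a..b, z t := calc
    V b - V a = ∫ t in a..b, V' t :=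
      (integral_eq_of_hasDerivAt_off_countable_of_le V V' hab hN hVcont hV hV').symm
    _ ≤ ∫ t in a..b, (K * u t - ε * z t) :=
      intervalIntegral.integral_mono_on hab hV' ((hu.const_mul K).sub (hz.const_mul ε)) hle
    _ = K * (∫ t in a..b, u t) - ε * ∫ t in a..b, z t := by
      rw [intervalIntegral.integral_sub (hu.const_mul K) (hz.const_mul ε),
        intervalIntegral.integral_const_mul, intervalIntegral.integral_const_mul]
  rw [div_mul_eq_mul_div, div_mul_eq_mul_div, ← add_div, le_div_iff₀ hε]
  linarith

/-- The trajectory may fail to be differentiable on the countable set `N`, for instance at the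
switching instants, where solutions typically have kinks. -/
theorem L2_stability_of_switched_linear_system_general
    {n p q : ℕ} {ι : Type*} [Finite ι]
    (Ahat : ι → Matrix (Fin n) (Fin n) ℝ)
    (Bhat : ι → Matrix (Fin n) (Fin p) ℝ)
    (C : ι → Matrix (Fin q) (Fin n) ℝ)
    (D : ι → Matrix (Fin q) (Fin p) ℝ)
    (P : Matrix (Fin n) (Fin n) ℝ)
    (Q : ι → Matrix (Fin q) (Fin q) ℝ)
    (S : ι → Matrix (Fin q) (Fin p) ℝ)
    (R : ι → Matrix (Fin p) (Fin p) ℝ)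
    (hP : P.PosSemidef)
    (hQneg : ∀ j, (-(Q j)).PosDef)
    (hΓ : ∀ j, (dissipationMatrix P (Ahat j) (Bhat j) (C j) (D j)
      (Q j) (S j) (R j)).PosSemidef) :
    ∃ a > (0 : ℝ), ∃ b > (0 : ℝ),
      ∀ (T : ℝ), 0 ≤ T →
      ∀ (σ : ℝ → ι), PiecewiseConstantOn σ (Icc 0 T) →
      ∀ (w : ℝ → Fin p → ℝ), ContinuousOn w (Icc 0 T) →
      ∀ (x : ℝ → Fin n → ℝ), ContinuousOn x (Icc 0 T) →
      ∀ (N : Set ℝ), N.Countable →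
        (∀ t ∈ Ioo 0 T \ N,
          HasDerivAt x (Ahat (σ t) *ᵥ x t + Bhat (σ t) *ᵥ w t) t) →
        (∫ t in (0 : ℝ)..T,
            (C (σ t) *ᵥ x t + D (σ t) *ᵥ w t) ⬝ᵥ
              (C (σ t) *ᵥ x t + D (σ t) *ᵥ w t)) ≤
          a * (∫ t in (0 : ℝ)..T, w t ⬝ᵥ w t) + b * (x 0 ⬝ᵥ (P *ᵥ x 0)) := by
  have hPsymm : P.IsSymm := by simpa using hP.isHermitian
  have hQsymm (j : ι) : (Q j).IsSymm := by simpa using (hQneg j).isHermitian.neg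
  obtain ⟨ε, hε, K, hK, hsupply⟩ := exists_forall_supplyRate_le hQneg S R
  refine ⟨K / ε, div_pos hK hε, 1 / ε, one_div_pos.mpr hε, ?_⟩
  intro T hT σ hσ w hw x hx N hN hx'
  have hstorage : IntervalIntegrable
      (fun t => 2 * (x t ⬝ᵥ (P *ᵥ (Ahat (σ t) *ᵥ x t + Bhat (σ t) *ᵥ w t)))) volume 0 T :=
    hσ.intervalIntegrable hT
      (f := fun j t => 2 * (x t ⬝ᵥ (P *ᵥ (Ahat j *ᵥ x t + Bhat j *ᵥ w t)))) fun j => by fun_prop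
  have hinput : IntervalIntegrable (fun t => w t ⬝ᵥ w t) volume 0 T :=
    ContinuousOn.intervalIntegrable_of_Icc hT (by fun_prop)
  have houtput : IntervalIntegrable (fun t => (C (σ t) *ᵥ x t + D (σ t) *ᵥ w t) ⬝ᵥ
      (C (σ t) *ᵥ x t + D (σ t) *ᵥ w t)) volume 0 T :=
    hσ.intervalIntegrable hT
      (f := fun j t => (C j *ᵥ x t + D j *ᵥ w t) ⬝ᵥ (C j *ᵥ x t + D j *ᵥ w t)) fun j => by fun_prop
  exact integral_le_of_storage_deriv_le hT hε hN (V := fun t => x t ⬝ᵥ (P *ᵥ x t)) (by fun_prop)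
    (fun t ht => hasDerivAt_dotProduct_mulVec_self hPsymm (hx' t ht))
    (hP.dotProduct_mulVec_nonneg (x T)) hstorage hinput houtput fun t _ =>
      (two_mul_dotProduct_mulVec_le_supplyRate hPsymm (hQsymm (σ t)) (hΓ (σ t)) (x t) (w t)).trans
        (hsupply (σ t) _ (w t))

/-- If Q_j is symmetric negative definite and the closed-loop
dissipation matrix Γ_j is positive definite for every mode j, then the
switched linear system ẋ = Â_σ x + B̂_σ w, y = C_σ x + D_σ w is L2-stable
under arbitrary (piecewise constant) switching:
∫₀ᵀ ‖y‖² ≤ a ∫₀ᵀ ‖w‖² + b x(0)'P x(0) for constants a, b > 0 depending only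
on the system and dissipativity matrices. -/
theorem L2_stability_of_switched_linear_system
    {n p q : ℕ} {ι : Type*} [Fintype ι]
    (Ahat : ι → Matrix (Fin n) (Fin n) ℝ)
    (Bhat : ι → Matrix (Fin n) (Fin p) ℝ)
    (C : ι → Matrix (Fin q) (Fin n) ℝ)
    (D : ι → Matrix (Fin q) (Fin p) ℝ)
    (P : Matrix (Fin n) (Fin n) ℝ)
    (Q : ι → Matrix (Fin q) (Fin q) ℝ)
    (S : ι → Matrix (Fin q) (Fin p) ℝ)
    (R : ι → Matrix (Fin p) (Fin p) ℝ)
    (hP : P.PosDef)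
    (hQsym : ∀ j, (Q j).IsSymm)
    (hQneg : ∀ j, (-(Q j)).PosDef)
    (hRsym : ∀ j, (R j).IsSymm)
    (hΓ : ∀ j, (dissipationMatrix P (Ahat j) (Bhat j) (C j) (D j)
      (Q j) (S j) (R j)).PosDef) :
    ∃ a > (0:ℝ), ∃ b > (0:ℝ),
      ∀ (T : ℝ), 0 < T →
      ∀ (σ : ℝ → ι), PiecewiseConstantOn σ (Set.Icc 0 T) →
      ∀ (w : ℝ → Fin p → ℝ), ContinuousOn w (Set.Icc 0 T) →
      ∀ (x : ℝ → Fin n → ℝ),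
        (∀ t ∈ Set.Icc (0:ℝ) T,
          HasDerivAt x (Ahat (σ t) *ᵥ x t + Bhat (σ t) *ᵥ w t) t) →
        (∫ t in (0:ℝ)..T,
            (C (σ t) *ᵥ x t + D (σ t) *ᵥ w t) ⬝ᵥ
              (C (σ t) *ᵥ x t + D (σ t) *ᵥ w t)) ≤
          a * (∫ t in (0:ℝ)..T, w t ⬝ᵥ w t) + b * (x 0 ⬝ᵥ (P *ᵥ x 0)) := by
  obtain ⟨a, ha, b, hb, hbound⟩ := L2_stability_of_switched_linear_system_general
    Ahat Bhat C D P Q S R hP.posSemidef hQneg fun j => (hΓ j).posSemidef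
  exact ⟨a, ha, b, hb, fun T hT σ hσ w hw x hx => hbound T hT.le σ hσ w hw x
    (HasDerivAt.continuousOn hx) ∅ countable_empty
    fun t ht => hx t (Ioo_subset_Icc_self ht.1)⟩
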